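/- arXiv:2306.05154 — 2 statements merged into one kernel-verified Lean document; each statement's English description precedes it below -/
import Mathlib

section
/- Let f be a signomial on ℝⁿ_{>0} such that for every face F of N(f) the following non-boundary condition holds: if f_{|F}(x) ≥ 0 for all x ∈ ℝⁿ_{>0}, then f_{|F} lies in the interior of the nonnegativity cone P⁺_{σ(f)∩F}. Then Trop(S(f)) = Σ(f), where S(f) = f^{-1}(ℝ_{<0}). -/
/-- A signomial on the positive orthant `ℝⁿ_{>0}`: a function
`x ↦ ∑_{μ ∈ supp} coeff μ * x ^ μ` with finite support and nonzero coefficients. -/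
structure Signomial (n : ℕ) where
  supp : Finset (Fin n → ℝ)
  coeff : (Fin n → ℝ) → ℝ
  coeff_ne_zero : ∀ μ ∈ supp, coeff μ ≠ 0
  coeff_eq_zero : ∀ μ ∉ supp, coeff μ = 0

namespace Signomial

variable {n : ℕ}

/-- The monomial `x^μ = ∏ i, x i ^ μ i` (real exponents). -/
noncomputable def mono (x μ : Fin n → ℝ) : ℝ := ∏ i, x i ^ μ i

/-- Evaluation of a signomial. -/
noncomputable def eval (f : Signomial n) (x : Fin n → ℝ) : ℝ :=
  ∑ μ ∈ f.supp, f.coeff μ * mono x μ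

open Classical in
/-- Evaluation of the restriction `f_{|S}` of `f` to a set `S ⊆ ℝⁿ`. -/
noncomputable def evalOn (f : Signomial n) (S : Set (Fin n → ℝ)) (x : Fin n → ℝ) : ℝ :=
  ∑ μ ∈ f.supp, if μ ∈ S then f.coeff μ * mono x μ else 0

/-- The Newton polytope `N(f) = conv(σ(f))`. -/
def newton (f : Signomial n) : Set (Fin n → ℝ) :=
  convexHull ℝ (f.supp : Set (Fin n → ℝ))

/-- Euclidean scalar product on `Fin n → ℝ`. -/
noncomputable def dot (v μ : Fin n → ℝ) : ℝ := ∑ i, v i * μ i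

/-- The face `N(f)_v` of the Newton polytope cut out by `v`. -/
def faceAt (f : Signomial n) (v : Fin n → ℝ) : Set (Fin n → ℝ) :=
  {μ ∈ f.newton | ∀ ν ∈ f.newton, dot v ν ≤ dot v μ}

/-- `F` is a (nonempty, exposed) face of the Newton polytope of `f`. -/
def IsFace (f : Signomial n) (F : Set (Fin n → ℝ)) : Prop :=
  F.Nonempty ∧ ∃ v, F = f.faceAt v

/-- The (outer) normal cone of a face `F` of `N(f)`. -/
def normalCone (f : Signomial n) (F : Set (Fin n → ℝ)) : Set (Fin n → ℝ) :=
  {v | F ⊆ f.faceAt v}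

/-- The negative normal cone `N_f^- = {v | N(f)_v ∩ σ₋(f) ≠ ∅}`. -/
def negCone (f : Signomial n) : Set (Fin n → ℝ) :=
  {v | ∃ μ ∈ f.supp, f.coeff μ < 0 ∧ μ ∈ f.faceAt v}

/-- The positive orthant `ℝⁿ_{>0}`. -/
def posOrth (n : ℕ) : Set (Fin n → ℝ) := {x | ∀ i, 0 < x i}

/-- `S(f) = f⁻¹(ℝ_{<0})` (inside the positive orthant). -/
def negSet₁ (f : Signomial n) : Set (Fin n → ℝ) :=
  {x ∈ posOrth n | f.eval x < 0}

/-- `S(f₁, …, f_k) = ⋂ᵢ fᵢ⁻¹(ℝ_{<0})` (inside the positive orthant). -/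
def negSet {k : ℕ} (f : Fin k → Signomial n) : Set (Fin n → ℝ) :=
  {x ∈ posOrth n | ∀ i, (f i).eval x < 0}

/-- The actual negative normal cone `Σ(f)` of a single signomial. -/
def actualNegCone₁ (f : Signomial n) : Set (Fin n → ℝ) :=
  {v | ∃ x ∈ posOrth n, f.evalOn (f.faceAt v) x < 0}

/-- The actual negative normal cone `Σ(f₁, …, f_k)`. -/
def actualNegCone {k : ℕ} (f : Fin k → Signomial n) : Set (Fin n → ℝ) :=
  {v | ∃ x ∈ posOrth n, ∀ i, (f i).evalOn ((f i).faceAt v) x < 0}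

/-- The real tropicalization (logarithmic limit set) of `S ⊆ ℝⁿ_{>0}`:
`w ∈ Trop(S)` iff there are sequences `x(m) ∈ S`, `t(m) ∈ (1,∞)` with `t(m) → ∞` and
`Log_{t(m)}(x(m)) → w`. -/
def trop (S : Set (Fin n → ℝ)) : Set (Fin n → ℝ) :=
  {w | ∃ (x : ℕ → Fin n → ℝ) (t : ℕ → ℝ),
    (∀ m, x m ∈ S) ∧ (∀ m, 1 < t m) ∧
    Filter.Tendsto t Filter.atTop Filter.atTop ∧
    Filter.Tendsto (fun m i => Real.log (x m i) / Real.log (t m))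
      Filter.atTop (nhds w)}

open Classical in
/-- The support of the restriction `f_{|F}`, i.e. `σ(f) ∩ F`. -/
noncomputable def restSupp (f : Signomial n) (F : Set (Fin n → ℝ)) : Finset (Fin n → ℝ) :=
  f.supp.filter (fun μ => μ ∈ F)

/-- Evaluation of the signomial with coefficient vector `c ∈ ℝ^A`. -/
noncomputable def evalVec (A : Finset (Fin n → ℝ)) (c : A → ℝ) (x : Fin n → ℝ) : ℝ :=
  ∑ μ : A, c μ * mono x (μ : Fin n → ℝ)

/-- The nonnegativity cone `P⁺_A ⊆ ℝ^A`. -/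
def nonnegConeSet (A : Finset (Fin n → ℝ)) : Set (A → ℝ) :=
  {c | ∀ x ∈ posOrth n, 0 ≤ evalVec A c x}

/-- The coefficient vector of `f` viewed in `ℝ^A`. -/
def coeffVec (f : Signomial n) (A : Finset (Fin n → ℝ)) : A → ℝ :=
  fun μ => f.coeff μ

/-- The non-boundary condition (NB): for every face `F` of `N(f)`, if `f_{|F}` is
nonnegative on the positive orthant then it lies in the interior of the nonnegativity
cone `P⁺_{σ(f) ∩ F}`. -/
def NBcond (f : Signomial n) : Prop :=
  ∀ F : Set (Fin n → ℝ), f.IsFace F →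
    coeffVec f (f.restSupp F) ∈ nonnegConeSet (f.restSupp F) →
    coeffVec f (f.restSupp F) ∈ interior (nonnegConeSet (f.restSupp F))

end Signomial

/-!
Let `x` run to infinity in the orthant with `log x / s → w` and `s → ∞`. Monomials of exponents
on the face `F = N(f)_w` then dominate all others exponentially in `s`, so that `f(x)` and
`f_{|F}(x)` differ by `o(x^μ)` for every exponent `μ` on `F`.

* On the ray `x · e^{s w}` the restriction `f_{|F}` and the monomials of `F` scale by the same
  factor, so a negative value of `f_{|F}` at `x` forces `f < 0` far along the ray.
  Hence `Σ(f) ⊆ Trop(S(f))`.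
* If `w ∉ Σ(f)`, then `f_{|F}` is nonnegative, hence interior to the nonnegativity cone. There is
  thus room to subtract `ε x^μ`, that is, `f_{|F} ≥ ε x^μ`. This beats the `o(x^μ)` error, so `f`
  is eventually positive along `x` and `w ∉ Trop(S(f))`.
-/

namespace Signomial

open Filter Topology

variable {n : ℕ} {f : Signomial n} {x v w μ ν : Fin n → ℝ}

lemma mono_pos (hx : x ∈ posOrth n) (μ : Fin n → ℝ) : 0 < mono x μ :=
  Finset.prod_pos fun i _ => Real.rpow_pos_of_pos (hx i) _

lemma mono_eq_exp_mul_dot_log_div (hx : x ∈ posOrth n) (μ : Fin n → ℝ) {s : ℝ} (hs : s ≠ 0) :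
    mono x μ = Real.exp (s * dot (fun i => Real.log (x i) / s) μ) := by
  rw [mono, dot, Finset.mul_sum, Real.exp_sum]
  refine Finset.prod_congr rfl fun i _ => ?_
  rw [Real.rpow_def_of_pos (hx i), ← mul_assoc, mul_div_cancel₀ _ hs]

lemma isLinearMap_dot (v : Fin n → ℝ) : IsLinearMap ℝ (dot v) :=
  ⟨dotProduct_add v, fun c => dotProduct_smul c v⟩

lemma continuous_dot_left (μ : Fin n → ℝ) : Continuous fun v => dot v μ := by
  unfold dot
  fun_prop

lemma exists_mem_supp_mem_faceAt (hf : f.supp.Nonempty) (v : Fin n → ℝ) :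
    ∃ μ ∈ f.supp, μ ∈ f.faceAt v := by
  obtain ⟨μ, hμ, hmax⟩ := f.supp.exists_max_image (dot v) hf
  have hsub : f.newton ⊆ {ν | dot v ν ≤ dot v μ} :=
    convexHull_min hmax (convex_halfSpace_le (isLinearMap_dot v) _)
  exact ⟨μ, hμ, subset_convexHull ℝ _ hμ, hsub⟩

lemma dot_eq_of_mem_faceAt (hμ : μ ∈ f.faceAt v) (hν : ν ∈ f.faceAt v) : dot v μ = dot v ν :=
  le_antisymm (hν.2 μ hμ.1) (hμ.2 ν hν.1)

lemma dot_lt_of_notMem_faceAt (hμ : μ ∈ f.faceAt v) (hν : ν ∈ f.supp) (hνF : ν ∉ f.faceAt v) :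
    dot v ν < dot v μ := by
  by_contra! hle
  exact hνF ⟨subset_convexHull ℝ _ hν, fun κ hκ => (hμ.2 κ hκ).trans hle⟩

section LogLimit

variable {α : Type*} {l : Filter α} {y : α → Fin n → ℝ} {s : α → ℝ}

lemma tendsto_mono_div_mono_zero (hy : ∀ a, y a ∈ posOrth n) (hs : Tendsto s l atTop)
    (hlim : Tendsto (fun a i => Real.log (y a i) / s a) l (𝓝 w)) (hνμ : dot w ν < dot w μ) :
    Tendsto (fun a => mono (y a) ν / mono (y a) μ) l (𝓝 0) := by
  have hdot (κ : Fin n → ℝ) :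
      Tendsto (fun a => dot (fun i => Real.log (y a i) / s a) κ) l (𝓝 (dot w κ)) :=
    ((continuous_dot_left κ).tendsto w).comp hlim
  have hexp := Real.tendsto_exp_atBot.comp
    (hs.atTop_mul_neg (sub_neg.mpr hνμ) ((hdot ν).sub (hdot μ)))
  refine hexp.congr' ?_
  filter_upwards [hs.eventually_ne_atTop 0] with a ha
  rw [Function.comp_apply, mul_sub, Real.exp_sub, ← mono_eq_exp_mul_dot_log_div (hy a) ν ha,
    ← mono_eq_exp_mul_dot_log_div (hy a) μ ha]

lemma tendsto_eval_div_mono_sub_evalOn_div_mono (hy : ∀ a, y a ∈ posOrth n)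
    (hs : Tendsto s l atTop) (hlim : Tendsto (fun a i => Real.log (y a i) / s a) l (𝓝 w))
    (hμ : μ ∈ f.faceAt w) :
    Tendsto (fun a => f.eval (y a) / mono (y a) μ - f.evalOn (f.faceAt w) (y a) / mono (y a) μ)
      l (𝓝 0) := by
  simp only [eval, evalOn, Finset.sum_div, ← Finset.sum_sub_distrib]
  rw [← Finset.sum_const_zero (s := f.supp)]
  refine tendsto_finsetSum _ fun ν hν => ?_
  by_cases hνF : ν ∈ f.faceAt w
  · simpa [hνF] using tendsto_const_nhds
  · have hratio := tendsto_mono_div_mono_zero hy hs hlim (dot_lt_of_notMem_faceAt hμ hν hνF)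
    simpa [hνF, mul_div_assoc] using hratio.const_mul (f.coeff ν)

end LogLimit

/-- The curve `s ↦ x · t ^ v`, where `t = e ^ s`. In logarithmic coordinates it is the ray from
`log x` in direction `v`; the parameter is `s` rather than `t` so that it matches the `log t` that
appears in `trop`. -/
noncomputable def logRay (x v : Fin n → ℝ) (s : ℝ) : Fin n → ℝ := fun i => x i * Real.exp (s * v i)

lemma logRay_mem_posOrth (hx : x ∈ posOrth n) (v : Fin n → ℝ) (s : ℝ) :
    logRay x v s ∈ posOrth n :=
  fun i => mul_pos (hx i) (Real.exp_pos _)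

lemma mono_logRay (hx : x ∈ posOrth n) (v μ : Fin n → ℝ) (s : ℝ) :
    mono (logRay x v s) μ = Real.exp (s * dot v μ) * mono x μ := by
  rw [mono, dot, mono, Finset.mul_sum, Real.exp_sum, ← Finset.prod_mul_distrib]
  refine Finset.prod_congr rfl fun i _ => ?_
  rw [logRay, Real.mul_rpow (hx i).le (Real.exp_pos _).le, ← Real.exp_mul, mul_assoc, mul_comm]

lemma evalOn_faceAt_logRay (hx : x ∈ posOrth n) (hμ : μ ∈ f.faceAt v) (s : ℝ) :
    f.evalOn (f.faceAt v) (logRay x v s) =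
      Real.exp (s * dot v μ) * f.evalOn (f.faceAt v) x := by
  rw [evalOn, evalOn, Finset.mul_sum]
  refine Finset.sum_congr rfl fun ν _ => ?_
  split_ifs with hν
  · rw [mono_logRay hx, dot_eq_of_mem_faceAt hν hμ, mul_left_comm]
  · rw [mul_zero]

lemma tendsto_log_logRay_div (hx : x ∈ posOrth n) (v : Fin n → ℝ) :
    Tendsto (fun s i => Real.log (logRay x v s i) / s) atTop (𝓝 v) := by
  refine tendsto_pi_nhds.mpr fun i => ?_
  have hlim : Tendsto (fun s => Real.log (x i) / s + v i) atTop (𝓝 (0 + v i)) :=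
    (tendsto_id.const_div_atTop _).add_const _
  rw [zero_add] at hlim
  refine hlim.congr' ?_
  filter_upwards [eventually_ne_atTop 0] with s hs
  rw [logRay, Real.log_mul (hx i).ne' (Real.exp_ne_zero _), Real.log_exp, add_div,
    mul_div_cancel_left₀ _ hs]

lemma eventually_eval_logRay_neg (hx : x ∈ posOrth n) (hneg : f.evalOn (f.faceAt v) x < 0) :
    ∀ᶠ s in atTop, f.eval (logRay x v s) < 0 := by
  obtain ⟨μ, -, hμ⟩ := exists_mem_supp_mem_faceAt (Finset.nonempty_of_sum_ne_zero hneg.ne) v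
  have hconst (s : ℝ) : f.evalOn (f.faceAt v) (logRay x v s) / mono (logRay x v s) μ =
      f.evalOn (f.faceAt v) x / mono x μ := by
    rw [evalOn_faceAt_logRay hx hμ, mono_logRay hx, mul_div_mul_left _ _ (Real.exp_ne_zero _)]
  have hdiff := tendsto_eval_div_mono_sub_evalOn_div_mono (logRay_mem_posOrth hx v) tendsto_id
    (tendsto_log_logRay_div hx v) hμ
  simp only [hconst] at hdiff
  have hquot := tendsto_sub_nhds_zero_iff.mp hdiff
  filter_upwards [hquot.eventually_lt_const (div_neg_of_neg_of_pos hneg (mono_pos hx μ))]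
    with s hs
  simpa using (div_lt_iff₀ (mono_pos (logRay_mem_posOrth hx v s) μ)).mp hs

lemma mem_trop_of_eventually_logRay_mem {S : Set (Fin n → ℝ)} (hx : x ∈ posOrth n)
    (hS : ∀ᶠ s in atTop, logRay x v s ∈ S) : v ∈ trop S := by
  obtain ⟨N, hN⟩ := eventually_atTop.mp (hS.and (eventually_gt_atTop 0))
  let s (m : ℕ) : ℝ := N + m
  have hsN (m : ℕ) : N ≤ s m := le_add_of_nonneg_right m.cast_nonneg
  have hs : Tendsto s atTop atTop :=
    tendsto_atTop_add_const_left _ _ tendsto_natCast_atTop_atTop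
  refine ⟨fun m => logRay x v (s m), fun m => Real.exp (s m), fun m => (hN _ (hsN m)).1,
    fun m => Real.one_lt_exp_iff.mpr (hN _ (hsN m)).2, Real.tendsto_exp_atTop.comp hs, ?_⟩
  simpa only [Real.log_exp, Function.comp_def] using (tendsto_log_logRay_div hx v).comp hs

lemma actualNegCone₁_subset_trop_negSet₁ (f : Signomial n) :
    actualNegCone₁ f ⊆ trop (negSet₁ f) := by
  rintro v ⟨x, hx, hneg⟩
  refine mem_trop_of_eventually_logRay_mem hx ?_
  filter_upwards [eventually_eval_logRay_neg hx hneg] with s hs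
  exact ⟨logRay_mem_posOrth hx v s, hs⟩

lemma mem_restSupp {F : Set (Fin n → ℝ)} : μ ∈ f.restSupp F ↔ μ ∈ f.supp ∧ μ ∈ F := by
  simp only [restSupp, Finset.mem_filter]

lemma evalVec_coeffVec_restSupp (f : Signomial n) (F : Set (Fin n → ℝ)) (x : Fin n → ℝ) :
    evalVec (f.restSupp F) (coeffVec f (f.restSupp F)) x = f.evalOn F x := by
  rw [evalOn, ← Finset.sum_filter]
  exact Finset.sum_coe_sort (f.restSupp F) fun μ => f.coeff μ * mono x μ

lemma notMem_actualNegCone₁_iff :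
    w ∉ actualNegCone₁ f ↔
      coeffVec f (f.restSupp (f.faceAt w)) ∈ nonnegConeSet (f.restSupp (f.faceAt w)) := by
  simp [actualNegCone₁, nonnegConeSet, evalVec_coeffVec_restSupp]

lemma evalVec_sub_single {A : Finset (Fin n → ℝ)} [DecidableEq A] (c : A → ℝ) (μ : A) (ε : ℝ)
    (x : Fin n → ℝ) :
    evalVec A (c - Pi.single μ ε) x = evalVec A c x - ε * mono x μ := by
  simp [evalVec, sub_mul, Finset.sum_sub_distrib, Pi.single_apply]

lemma exists_pos_mul_mono_le_evalVec {A : Finset (Fin n → ℝ)} {c : A → ℝ}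
    (hc : c ∈ interior (nonnegConeSet A)) (μ : A) :
    ∃ ε > 0, ∀ x ∈ posOrth n, ε * mono x μ ≤ evalVec A c x := by
  classical
  have hpath : Tendsto (fun ε : ℝ => c - Pi.single μ ε) (𝓝 0) (𝓝 c) := by
    have hcont : Continuous fun ε : ℝ => c - Pi.single μ ε :=
      continuous_const.sub (continuous_single (A := fun _ => ℝ) μ)
    exact hcont.tendsto' 0 c (by rw [Pi.single_zero, sub_zero])
  have hmem : ∀ᶠ ε in 𝓝[>] 0, c - Pi.single μ ε ∈ nonnegConeSet A :=
    nhdsWithin_le_nhds (hpath (mem_interior_iff_mem_nhds.mp hc))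
  obtain ⟨ε, hε, hpos⟩ := (hmem.and self_mem_nhdsWithin).exists
  refine ⟨ε, hpos, fun x hx => ?_⟩
  simpa only [evalVec_sub_single, sub_nonneg] using hε x hx

lemma eventually_eval_pos {α : Type*} {l : Filter α} {y : α → Fin n → ℝ} {s : α → ℝ}
    (hy : ∀ a, y a ∈ posOrth n) (hs : Tendsto s l atTop)
    (hlim : Tendsto (fun a i => Real.log (y a i) / s a) l (𝓝 w)) (hf : f.supp.Nonempty)
    (hint : coeffVec f (f.restSupp (f.faceAt w)) ∈
      interior (nonnegConeSet (f.restSupp (f.faceAt w)))) :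
    ∀ᶠ a in l, 0 < f.eval (y a) := by
  obtain ⟨μ, hμ, hμF⟩ := exists_mem_supp_mem_faceAt hf w
  obtain ⟨ε, hε, hbound⟩ :=
    exists_pos_mul_mono_le_evalVec hint ⟨μ, mem_restSupp.mpr ⟨hμ, hμF⟩⟩
  have hdiff := tendsto_eval_div_mono_sub_evalOn_div_mono hy hs hlim hμF
  filter_upwards [hdiff.eventually_const_lt (neg_lt_zero.mpr hε)] with a ha
  have hmono := mono_pos (hy a) μ
  have hface : ε ≤ f.evalOn (f.faceAt w) (y a) / mono (y a) μ := by
    rw [le_div_iff₀ hmono, ← evalVec_coeffVec_restSupp]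
    exact hbound _ (hy a)
  have hquot : 0 < f.eval (y a) / mono (y a) μ := by linarith
  exact (div_pos_iff_of_pos_right hmono).mp hquot

lemma supp_nonempty_of_mem_trop_negSet₁ (hw : w ∈ trop (negSet₁ f)) : f.supp.Nonempty := by
  obtain ⟨x, -, hx, -⟩ := hw
  exact Finset.nonempty_of_sum_ne_zero (hx 0).2.ne

lemma coeffVec_notMem_interior_of_mem_trop_negSet₁ (hw : w ∈ trop (negSet₁ f)) :
    coeffVec f (f.restSupp (f.faceAt w)) ∉
      interior (nonnegConeSet (f.restSupp (f.faceAt w))) := by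
  intro hint
  have hf := supp_nonempty_of_mem_trop_negSet₁ hw
  obtain ⟨x, t, hx, -, ht, hlim⟩ := hw
  obtain ⟨m, hm⟩ := (eventually_eval_pos (fun m => (hx m).1) (Real.tendsto_log_atTop.comp ht)
    hlim hf hint).exists
  exact hm.not_gt (hx m).2

end Signomial

open Signomial in
/-- If `f` satisfies the non-boundary condition (NB) for all faces of
`N(f)`, then `Trop(S(f)) = Σ(f)`. -/
theorem trop_eq_actualNegCone {n : ℕ} (f : Signomial n) (hNB : NBcond f) :
    trop (negSet₁ f) = actualNegCone₁ f := by
  refine Set.Subset.antisymm (fun w hw => ?_) (actualNegCone₁_subset_trop_negSet₁ f)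
  by_contra hw_notMem
  have hnonneg := notMem_actualNegCone₁_iff.mp hw_notMem
  obtain ⟨μ, -, hμ⟩ := exists_mem_supp_mem_faceAt (supp_nonempty_of_mem_trop_negSet₁ hw) w
  have hface : f.IsFace (f.faceAt w) := ⟨⟨μ, hμ⟩, w, rfl⟩
  exact coeffVec_notMem_interior_of_mem_trop_negSet₁ hw (hNB _ hface hnonneg)
end

section
/- For each integer m ≥ 2 define h_m : ℝ_{>0} → ℝ by h_m(t) = t² − t^{2 − 2/m} − t + 1. Then h_m(1) = 0 for every m, and the largest positive root of h_m tends to infinity: for every M > 1 there exists m₀ such that for all m ≥ m₀ the function h_m has a root in the interval (M, ∞). In contrast, the limit function h(t) = t² − t² − t + 1 = −t + 1 has t = 1 as its unique positive root. -/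
/-- `h_m(t) = t² − t^{2−2/m} − t + 1` (real powers). -/
noncomputable def hm (m : ℕ) (t : ℝ) : ℝ :=
  t ^ (2 : ℝ) - t ^ ((2 : ℝ) - 2 / (m : ℝ)) - t + 1

/-!
Fix `M > 1` and let `w → (1, 1)` with `w₂ < w₁`. At `t = M` the values `f(t^w)` converge to
`1 - M < 0`, so they are eventually negative. However, as soon as `w₂ < w₁` the leading terms
`t^{2w₁}` and `-t^{2w₂}` no longer cancel, and the positive one wins as `t → ∞`. The intermediate
value theorem then yields a root beyond `M`.
-/

open Asymptotics Filter Set Topology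

lemma isLittleO_rpow_rpow_atTop {a b : ℝ} (hab : a < b) :
    (fun t : ℝ ↦ t ^ a) =o[atTop] fun t ↦ t ^ b := by
  have hne : ∀ᶠ t : ℝ in atTop, t ^ b = 0 → t ^ a = 0 := by
    filter_upwards [eventually_gt_atTop 0] with t ht h
    exact absurd h (Real.rpow_pos_of_pos ht b).ne'
  refine (isLittleO_iff_tendsto' hne).2 ?_
  refine (tendsto_rpow_neg_atTop (sub_pos.2 hab)).congr' ?_
  filter_upwards [eventually_gt_atTop 0] with t ht
  rw [neg_sub, Real.rpow_sub ht]

/-- The function `t ↦ f(t^w)` on the positive reals, where `f(x₁, x₂) = x₁² − x₁ + 1 − x₂²` is the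
signomial restricted to the monomial curve `t^w = (t^{w₁}, t^{w₂})`. The family `hm` is the sequence
of weights `w = (1, 1 − 1/m)`, and the limit function is the weight `(1, 1)`. -/
noncomputable def signomialAlong (w : ℝ × ℝ) (t : ℝ) : ℝ :=
  (t ^ w.1) ^ 2 - t ^ w.1 + 1 - (t ^ w.2) ^ 2

lemma hm_eq_signomialAlong (m : ℕ) {t : ℝ} (ht : 0 ≤ t) :
    hm m t = signomialAlong (1, 1 - 1 / m) t := by
  have hexp : (2 : ℝ) - 2 / m = (1 - 1 / m) * (2 : ℕ) := by push_cast; ring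
  rw [hm, signomialAlong, hexp, Real.rpow_mul_natCast ht, Real.rpow_two, Real.rpow_one]
  ring

namespace signomialAlong

lemma apply_one (w : ℝ × ℝ) : signomialAlong w 1 = 0 := by
  simp [signomialAlong]

lemma one_one (t : ℝ) : signomialAlong (1, 1) t = -t + 1 := by
  simp only [signomialAlong, Real.rpow_one]
  ring

lemma continuous_weight {t : ℝ} (ht : t ≠ 0) : Continuous fun w ↦ signomialAlong w t := by
  have hpow {g : ℝ × ℝ → ℝ} (hg : Continuous g) : Continuous fun w ↦ t ^ g w :=
    continuous_const.rpow hg fun _ ↦ .inl ht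
  exact ((((hpow continuous_fst).pow 2).sub (hpow continuous_fst)).add continuous_const).sub
    ((hpow continuous_snd).pow 2)

lemma continuousAt (w : ℝ × ℝ) {t : ℝ} (ht : t ≠ 0) : ContinuousAt (signomialAlong w) t := by
  have hpow (a : ℝ) : ContinuousAt (fun t : ℝ ↦ t ^ a) t :=
    Real.continuousAt_rpow_const t a (.inl ht)
  exact ((((hpow w.1).pow 2).sub (hpow w.1)).add continuousAt_const).sub ((hpow w.2).pow 2)

lemma tendsto_atTop {w : ℝ × ℝ} (hpos : 0 < w.1) (hlt : w.2 < w.1) :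
    Tendsto (signomialAlong w) atTop atTop := by
  have hx : Tendsto (fun t : ℝ ↦ t ^ w.1) atTop atTop := tendsto_rpow_atTop hpos
  have hx_sq : Tendsto (fun t : ℝ ↦ (t ^ w.1) ^ 2) atTop atTop :=
    (tendsto_pow_atTop two_ne_zero).comp hx
  have hlin : (fun t : ℝ ↦ t ^ w.1) =o[atTop] fun t ↦ (t ^ w.1) ^ 2 := by
    simpa [Function.comp_def] using
      (isLittleO_pow_pow_atTop_of_lt (𝕜 := ℝ) one_lt_two).comp_tendsto hx
  have hone : (fun _ : ℝ ↦ (1 : ℝ)) =o[atTop] fun t ↦ (t ^ w.1) ^ 2 :=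
    isLittleO_const_left.2 (.inr (tendsto_norm_atTop_atTop.comp hx_sq))
  have hsnd : (fun t : ℝ ↦ (t ^ w.2) ^ 2) =o[atTop] fun t ↦ (t ^ w.1) ^ 2 :=
    (isLittleO_rpow_rpow_atTop hlt).pow two_pos
  have hequiv : signomialAlong w ~[atTop] fun t ↦ (t ^ w.1) ^ 2 :=
    ((IsEquivalent.refl.sub_isLittleO hlin).add_isLittleO hone).sub_isLittleO hsnd
  exact hequiv.symm.tendsto_atTop hx_sq

lemma exists_root_gt {w : ℝ × ℝ} (hpos : 0 < w.1) (hlt : w.2 < w.1) {M : ℝ} (hM : 0 < M)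
    (hneg : signomialAlong w M < 0) : ∃ t, M < t ∧ signomialAlong w t = 0 := by
  have hcont : ContinuousOn (signomialAlong w) (Ioi M) := fun t ht ↦
    (continuousAt w (hM.trans ht).ne').continuousWithinAt
  have hleft : Tendsto (signomialAlong w) (𝓝[>] M) (𝓝 (signomialAlong w M)) :=
    (continuousAt w hM.ne').continuousWithinAt
  exact isPreconnected_Ioi.intermediate_value_Ioi (l₁ := 𝓝[>] M) inf_le_right
    (le_principal_iff.2 (Ioi_mem_atTop M)) hcont hleft (tendsto_atTop hpos hlt) hneg

lemma eventually_neg {M : ℝ} (hM : 1 < M) : ∀ᶠ w in 𝓝 (1, 1), signomialAlong w M < 0 := by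
  have hlim : signomialAlong (1, 1) M < 0 := by rw [one_one]; linarith
  exact (continuous_weight (by positivity)).continuousAt.eventually_lt_const hlim

end signomialAlong

lemma tendsto_weight_nhdsWithin :
    Tendsto (fun m : ℕ ↦ ((1 : ℝ), 1 - 1 / (m : ℝ))) atTop (𝓝[{w | w.2 < w.1}] (1, 1)) := by
  refine tendsto_nhdsWithin_iff.2 ⟨tendsto_const_nhds.prodMk_nhds ?_, ?_⟩
  · simpa using tendsto_one_div_atTop_nhds_zero_nat.const_sub (1 : ℝ)
  · filter_upwards [eventually_gt_atTop 0] with m hm_pos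
    exact sub_lt_self 1 (by positivity)

theorem roots_escape_to_infinity_general :
    (∀ w, signomialAlong w 1 = 0) ∧
    (∀ M : ℝ, 1 < M → ∀ᶠ w in 𝓝[{w | w.2 < w.1}] (1, 1), ∃ t, M < t ∧ signomialAlong w t = 0) ∧
    (∀ t : ℝ, signomialAlong (1, 1) t = 0 ↔ t = 1) := by
  refine ⟨signomialAlong.apply_one, fun M hM ↦ ?_, fun t ↦ ?_⟩
  · have hfst : ∀ᶠ w : ℝ × ℝ in 𝓝 (1, 1), 0 < w.1 :=
      continuous_fst.continuousAt.eventually_const_lt one_pos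
    filter_upwards [self_mem_nhdsWithin, nhdsWithin_le_nhds hfst,
      nhdsWithin_le_nhds (signomialAlong.eventually_neg hM)] with w hlt hpos hneg
    exact signomialAlong.exists_root_gt hpos hlt (by positivity) hneg
  · rw [signomialAlong.one_one, neg_add_eq_zero]

/-- `h_m(1) = 0` for every `m ≥ 2`; the largest positive root of `h_m`
tends to infinity, i.e. for every `M > 1` there is `m₀` such that for all `m ≥ m₀` the
function `h_m` has a root in `(M, ∞)`; in contrast, the limit function
`h(t) = −t + 1` has `t = 1` as its unique positive root. -/
theorem roots_escape_to_infinity :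
    (∀ m : ℕ, 2 ≤ m → hm m 1 = 0) ∧
    (∀ M : ℝ, 1 < M → ∃ m₀ : ℕ, ∀ m : ℕ, m₀ ≤ m → ∃ t : ℝ, M < t ∧ hm m t = 0) ∧
    (∀ t : ℝ, 0 < t → (-t + 1 = 0 ↔ t = 1)) := by
  obtain ⟨hone, hescape, hlimit⟩ := roots_escape_to_infinity_general
  refine ⟨fun m _ ↦ ?_, fun M hM ↦ ?_, fun t _ ↦ ?_⟩
  · rw [hm_eq_signomialAlong m zero_le_one, hone]
  · refine eventually_atTop.1 ((tendsto_weight_nhdsWithin.eventually (hescape M hM)).mono ?_)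
    rintro m ⟨t, hMt, ht⟩
    exact ⟨t, hMt, (hm_eq_signomialAlong m (by linarith)).trans ht⟩
  · rw [← signomialAlong.one_one, hlimit]
end
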